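/- Let ψ : ℝ³ → ℝ be measurable, 2π-periodic in each variable, and integrable on [0,2π]³. Then Ψ̃(t,ξ) := ∫_{[0,2π]³} Φ̃(t, ξ−z)·ψ(z) dz is infinitely differentiable on (0,∞) × ℝ³, is 2π-periodic in each space variable, solves the heat equation ∂ₜΨ̃ = ΔΨ̃ pointwise on (0,∞) × ℝ³, and attains the initial data in L¹: lim_{t→0⁺} ∫_{[0,2π]³} |Ψ̃(t,ξ) − ψ(ξ)| dξ = 0. -/

import Mathlib

open MeasureTheory Real Filter

/-- The one-dimensional periodic heat kernel
`Φ(t,x) = 1/(2π) + (1/π)·∑_{n=1}^∞ exp(−n²t)·cos(nx)`. -/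
noncomputable def Φ (t x : ℝ) : ℝ :=
  1 / (2 * π) + (1 / π) * ∑' n : ℕ, Real.exp (-((n : ℝ) + 1) ^ 2 * t) * Real.cos (((n : ℝ) + 1) * x)

/-- The three-dimensional periodic heat kernel `Φ̃(t,x) = Φ(t,x₁)·Φ(t,x₂)·Φ(t,x₃)`. -/
noncomputable def Φ₃ (t x₁ x₂ x₃ : ℝ) : ℝ := Φ t x₁ * Φ t x₂ * Φ t x₃

/-- `Ψ̃(t,ξ) = ∫_{[0,2π]³} Φ̃(t,ξ−z)·ψ(z) dz`. -/
noncomputable def Ψ₃ (ψ : ℝ × ℝ × ℝ → ℝ) (t ξ₁ ξ₂ ξ₃ : ℝ) : ℝ :=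
  ∫ z₁ in (0 : ℝ)..(2 * π), ∫ z₂ in (0 : ℝ)..(2 * π), ∫ z₃ in (0 : ℝ)..(2 * π),
    Φ₃ t (ξ₁ - z₁) (ξ₂ - z₂) (ξ₃ - z₃) * ψ (z₁, z₂, z₃)

/-!
On the mode `e_k(ξ) = exp(i k·ξ)` convolution with the kernel is multiplication by `exp(-|k|² t)`,
so for `t > 0` the solution is `∑_k c_k exp(-|k|² t + i k·ξ)`, with `c_k` the bounded Fourier
coefficients of `ψ`. Differentiating once multiplies the `k`-th coefficient by a linear functional
whose norm grows polynomially in `k`; the Gaussian decay absorbs any number of such factors, locally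
uniformly in `t > 0`, which gives smoothness, and the heat equation holds mode by mode. The kernel
is nonnegative with total mass one, so the flow contracts `L¹`. The initial value is attained for
each `e_k`, hence for trigonometric polynomials, and these are dense in `L¹` of the torus.
-/

open scoped Topology

universe u

section PiProduct

variable {ι κ : Type*} [Fintype ι]

theorem summable_pi_prod_of_nonneg {f : ι → κ → ℝ} (h0 : ∀ i k, 0 ≤ f i k)
    (hf : ∀ i, Summable (f i)) : Summable fun k : ι → κ ↦ ∏ i, f i (k i) := by
  classical
  refine summable_of_sum_le (c := ∏ i, ∑' j, f i j)
    (fun k ↦ Finset.prod_nonneg fun i _ ↦ h0 i _) fun S ↦ ?_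
  let T : ι → Finset κ := fun i ↦ S.image (· i)
  have hST : S ⊆ Fintype.piFinset T := fun k hk ↦
    Fintype.mem_piFinset.2 fun i ↦ Finset.mem_image_of_mem (· i) hk
  calc ∑ k ∈ S, ∏ i, f i (k i)
      ≤ ∑ k ∈ Fintype.piFinset T, ∏ i, f i (k i) :=
        Finset.sum_le_sum_of_subset_of_nonneg hST fun k _ _ ↦ Finset.prod_nonneg fun i _ ↦ h0 i _
    _ = ∏ i, ∑ j ∈ T i, f i j := (Finset.prod_univ_sum T f).symm
    _ ≤ ∏ i, ∑' j, f i j := Finset.prod_le_prod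
        (fun i _ ↦ Finset.sum_nonneg fun j _ ↦ h0 i j)
        fun i _ ↦ (hf i).sum_le_tsum _ fun j _ ↦ h0 i j

theorem tendsto_piFinset_const_atTop [DecidableEq ι] :
    Tendsto (fun s : Finset κ ↦ Fintype.piFinset fun _ : ι ↦ s) atTop atTop := by
  classical
  refine tendsto_atTop_finset_of_monotone
    (fun s t hst ↦ Fintype.piFinset_subset _ _ fun _ ↦ hst) fun k ↦ ?_
  exact ⟨Finset.univ.image k, Fintype.mem_piFinset.2 fun i ↦ by simp⟩

theorem hasSum_pi_prod {R : Type*} [NormedCommRing R] [NormOneClass R] [CompleteSpace R]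
    {f : ι → κ → R} {a : ι → R} (hf : ∀ i, HasSum (f i) (a i))
    (hn : ∀ i, Summable fun k ↦ ‖f i k‖) :
    HasSum (fun k : ι → κ ↦ ∏ i, f i (k i)) (∏ i, a i) := by
  classical
  have hsum : Summable fun k : ι → κ ↦ ∏ i, f i (k i) :=
    .of_norm_bounded (summable_pi_prod_of_nonneg (fun i k ↦ norm_nonneg (f i k)) hn)
      fun k ↦ Finset.norm_prod_le _ _
  have hbox : Tendsto (fun s : Finset κ ↦ ∑ k ∈ Fintype.piFinset fun _ ↦ s, ∏ i, f i (k i))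
      atTop (𝓝 (∏ i, a i)) := by
    simp_rw [← Finset.prod_univ_sum]
    exact tendsto_finsetProd _ fun i _ ↦ hf i
  have hlim := hsum.hasSum.comp tendsto_piFinset_const_atTop
  exact tendsto_nhds_unique hlim hbox ▸ hsum.hasSum

end PiProduct

section ExpSeries

/-- The exponential series `∑ₖ exp(lₖ p) aₖ` with real-linear exponents `lₖ : E → ℂ` and
coefficients `aₖ` in a complex vector space, as a function of `p : E`. -/
noncomputable def expSeries {ι E V : Type*} [NormedAddCommGroup E] [NormedSpace ℝ E]
    [NormedAddCommGroup V] [NormedSpace ℂ V] (l : ι → E →L[ℝ] ℂ) (a : ι → V) (p : E) : V :=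
  ∑' k, Complex.exp (l k p) • a k

/-- Near every point of `s`, the exponential series with exponents `l` and coefficients `a`, and
all the series obtained by differentiating it term by term, are dominated by convergent series.
The `m`-th moment `‖aₖ‖ ‖lₖ‖ᵐ |exp(lₖ q)|` bounds the `m`-th derivative of the `k`-th term. -/
def HasLocallySummableMoments {ι E V : Type*} [NormedAddCommGroup E] [NormedSpace ℝ E]
    [NormedAddCommGroup V] (l : ι → E →L[ℝ] ℂ) (a : ι → V) (s : Set E) : Prop :=
  ∀ p ∈ s, ∀ m : ℕ, ∃ u : ι → ℝ, Summable u ∧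
    ∀ᶠ q in 𝓝 p, ∀ k, ‖a k‖ * ‖l k‖ ^ m * Real.exp (l k q).re ≤ u k

theorem norm_smulRight_le {E V : Type*} [NormedAddCommGroup E] [NormedSpace ℝ E]
    [NormedAddCommGroup V] [NormedSpace ℝ V] [NormedSpace ℂ V] [IsScalarTower ℝ ℂ V]
    (f : E →L[ℝ] ℂ) (v : V) : ‖f.smulRight v‖ ≤ ‖f‖ * ‖v‖ := by
  refine ContinuousLinearMap.opNorm_le_bound _ (by positivity) fun x ↦ ?_
  calc ‖f x • v‖ = ‖f x‖ * ‖v‖ := norm_smul _ _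
    _ ≤ ‖f‖ * ‖x‖ * ‖v‖ := by gcongr; exact f.le_opNorm x
    _ = ‖f‖ * ‖v‖ * ‖x‖ := by ring

namespace HasLocallySummableMoments

variable {ι E V : Type*} [NormedAddCommGroup E] [NormedSpace ℝ E]
  [NormedAddCommGroup V] {l : ι → E →L[ℝ] ℂ} {a : ι → V} {s : Set E}

theorem of_norm_le_mul {W : Type*} [NormedAddCommGroup W] {b : ι → W} {C : ℝ}
    (h : HasLocallySummableMoments l a s) (hb : ∀ k, ‖b k‖ ≤ C * (‖l k‖ * ‖a k‖)) :
    HasLocallySummableMoments l b s := by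
  intro p hp m
  obtain ⟨u, hu, hbound⟩ := h p hp (m + 1)
  refine ⟨fun k ↦ |C| * u k, hu.mul_left _, hbound.mono fun q hq k ↦ ?_⟩
  calc ‖b k‖ * ‖l k‖ ^ m * Real.exp (l k q).re
      ≤ |C| * (‖l k‖ * ‖a k‖) * ‖l k‖ ^ m * Real.exp (l k q).re := by
        gcongr
        exact (hb k).trans (by gcongr; exact le_abs_self C)
    _ = |C| * (‖a k‖ * ‖l k‖ ^ (m + 1) * Real.exp (l k q).re) := by ring
    _ ≤ |C| * u k := by gcongr; exact hq k

variable [NormedSpace ℂ V]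

theorem summable [CompleteSpace V] (h : HasLocallySummableMoments l a s) {p : E} (hp : p ∈ s) :
    Summable fun k ↦ Complex.exp (l k p) • a k := by
  obtain ⟨u, hu, hbound⟩ := h p hp 0
  refine .of_norm_bounded hu fun k ↦ ?_
  simpa [norm_smul, Complex.norm_exp, mul_comm] using hbound.self_of_nhds k

theorem apply_smul (h : HasLocallySummableMoments l a s) (e : E) :
    HasLocallySummableMoments l (fun k ↦ l k e • a k) s :=
  h.of_norm_le_mul (C := ‖e‖) fun k ↦ by
    calc ‖l k e • a k‖ = ‖l k e‖ * ‖a k‖ := norm_smul _ _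
      _ ≤ ‖l k‖ * ‖e‖ * ‖a k‖ := by gcongr; exact (l k).le_opNorm e
      _ = ‖e‖ * (‖l k‖ * ‖a k‖) := by ring

variable [NormedSpace ℝ V] [IsScalarTower ℝ ℂ V]

theorem smulRight (h : HasLocallySummableMoments l a s) :
    HasLocallySummableMoments l (fun k ↦ (l k).smulRight (a k)) s :=
  h.of_norm_le_mul (C := 1) fun k ↦ by simpa using norm_smulRight_le (l k) (a k)

variable [CompleteSpace V]

theorem hasFDerivAt (h : HasLocallySummableMoments l a s) {p : E} (hp : p ∈ s) :
    HasFDerivAt (expSeries l a) (expSeries l (fun k ↦ (l k).smulRight (a k)) p) p := by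
  obtain ⟨u, hu, hbound⟩ := h p hp 1
  obtain ⟨r, hr, hball⟩ := Metric.eventually_nhds_iff_ball.1 hbound
  have hpr : p ∈ Metric.ball p r := Metric.mem_ball_self hr
  have hterm (k : ι) (q : E) : HasFDerivAt (fun q ↦ Complex.exp (l k q) • a k)
      (Complex.exp (l k q) • (l k).smulRight (a k)) q := by
    convert! (l k).hasFDerivAt.cexp.smul_const (a k) using 1
    ext v
    simp [smul_smul]
  refine hasFDerivAt_tsum_of_isPreconnected hu Metric.isOpen_ball
    (convex_ball p r).isPreconnected (fun k q _ ↦ hterm k q) (fun k q hq ↦ ?_) hpr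
    (h.summable hp) hpr
  calc ‖Complex.exp (l k q) • (l k).smulRight (a k)‖
      ≤ Real.exp (l k q).re * (‖l k‖ * ‖a k‖) := by
        rw [norm_smul, Complex.norm_exp]
        gcongr
        exact norm_smulRight_le _ _
    _ = ‖a k‖ * ‖l k‖ ^ 1 * Real.exp (l k q).re := by ring
    _ ≤ u k := hball q hq k

theorem hasDerivAt_comp (h : HasLocallySummableMoments l a s) {γ : ℝ → E} {e : E} {y : ℝ}
    (hγ : HasDerivAt γ e y) (hy : γ y ∈ s) :
    HasDerivAt (fun x ↦ expSeries l a (γ x)) (expSeries l (fun k ↦ l k e • a k) (γ y)) y := by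
  refine ((h.hasFDerivAt hy).comp_hasDerivAt y hγ).congr_deriv ?_
  simpa [expSeries] using
    (ContinuousLinearMap.apply ℝ V e).map_tsum (h.smulRight.summable hy)

theorem contDiffOn_nat {E : Type u} [NormedAddCommGroup E] [NormedSpace ℝ E]
    {l : ι → E →L[ℝ] ℂ} {s : Set E} (hs : IsOpen s) (n : ℕ) :
    ∀ {V : Type u} [NormedAddCommGroup V] [NormedSpace ℝ V] [NormedSpace ℂ V]
      [IsScalarTower ℝ ℂ V] [CompleteSpace V] {a : ι → V},
      HasLocallySummableMoments l a s → ContDiffOn ℝ n (expSeries l a) s := by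
  induction n with
  | zero => exact fun h ↦ contDiffOn_zero.2 fun p hp ↦
      (h.hasFDerivAt hp).continuousAt.continuousWithinAt
  | succ n ih =>
    intro V _ _ _ _ _ a h
    rw [Nat.cast_succ, contDiffOn_succ_iff_fderiv_of_isOpen hs]
    refine ⟨fun p hp ↦ (h.hasFDerivAt hp).differentiableAt.differentiableWithinAt, by simp, ?_⟩
    exact (ih h.smulRight).congr fun p hp ↦ (h.hasFDerivAt hp).fderiv

theorem contDiffOn {E V : Type u} [NormedAddCommGroup E] [NormedSpace ℝ E]
    [NormedAddCommGroup V] [NormedSpace ℝ V] [NormedSpace ℂ V] [IsScalarTower ℝ ℂ V]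
    [CompleteSpace V] {l : ι → E →L[ℝ] ℂ} {a : ι → V} {s : Set E}
    (h : HasLocallySummableMoments l a s) (hs : IsOpen s) :
    ContDiffOn ℝ (⊤ : ℕ∞) (expSeries l a) s :=
  contDiffOn_infty.2 fun n ↦ contDiffOn_nat hs n h

end HasLocallySummableMoments

end ExpSeries

section PeriodicHeatKernel

variable {t : ℝ}

theorem summable_int_gaussian {δ : ℝ} (hδ : 0 < δ) :
    Summable fun n : ℤ ↦ Real.exp (-((n : ℝ) ^ 2 * δ)) := by
  convert summable_pow_mul_jacobiTheta₂_term_bound 0 (T := δ / π) (by positivity) 0 using 3 with n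
  simp only [pow_zero, one_mul]
  field_simp
  ring_nf

theorem Φ_eq_cosKernel (ht : 0 < t) (x : ℝ) :
    Φ t x = HurwitzZeta.cosKernel ((x / (2 * π) : ℝ) : UnitAddCircle) (t / π) / (2 * π) := by
  have hsum := HurwitzZeta.hasSum_nat_cosKernel₀ (x / (2 * π)) (t := t / π) (by positivity)
  have hterm (n : ℕ) : 2 * Real.cos (2 * π * (x / (2 * π)) * (n + 1)) *
      Real.exp (-π * (n + 1) ^ 2 * (t / π)) =
      2 * (Real.exp (-((n : ℝ) + 1) ^ 2 * t) * Real.cos (((n : ℝ) + 1) * x)) := by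
    rw [show 2 * π * (x / (2 * π)) * ((n : ℝ) + 1) = ((n : ℝ) + 1) * x by field_simp,
      show -π * ((n : ℝ) + 1) ^ 2 * (t / π) = -((n : ℝ) + 1) ^ 2 * t by field_simp]
    ring
  rw [Φ, eq_add_of_sub_eq hsum.tsum_eq.symm]
  simp_rw [hterm, tsum_mul_left]
  rw [add_comm, add_div, mul_div_mul_left _ _ two_ne_zero, one_div_mul_eq_div]

theorem hasSum_Φ (ht : 0 < t) (x : ℝ) :
    HasSum (fun n : ℤ ↦ Complex.exp (-(n : ℂ) ^ 2 * t + Complex.I * (n * x)) / (2 * π))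
      (Φ t x : ℂ) := by
  have h := (HurwitzZeta.hasSum_int_cosKernel (x / (2 * π)) (t := t / π) (by positivity)).div_const
    (2 * π : ℂ)
  rw [Φ_eq_cosKernel ht]
  push_cast at h ⊢
  refine h.congr_fun fun n ↦ ?_
  have hπ : (π : ℂ) ≠ 0 := Complex.ofReal_ne_zero.2 pi_ne_zero
  rw [← Complex.exp_add]
  congr 2
  field_simp
  ring

theorem norm_exp_neg_sq_mul_add_I_mul (n : ℤ) (t x : ℝ) :
    ‖Complex.exp (-(n : ℂ) ^ 2 * t + Complex.I * (n * x))‖ = Real.exp (-((n : ℝ) ^ 2 * t)) := by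
  have h : -(n : ℂ) ^ 2 * t + Complex.I * (n * x) =
      ((-((n : ℝ) ^ 2 * t) : ℝ) : ℂ) + ((n * x : ℝ) : ℂ) * Complex.I := by
    push_cast
    ring
  rw [h, Complex.exp_add, norm_mul, Complex.norm_exp_ofReal_mul_I, mul_one, Complex.norm_exp_ofReal]

theorem summable_norm_Φ_term (ht : 0 < t) (x : ℝ) : Summable fun n : ℤ ↦
    ‖Complex.exp (-(n : ℂ) ^ 2 * t + Complex.I * (n * x)) / (2 * π)‖ := by
  simpa only [norm_div, norm_exp_neg_sq_mul_add_I_mul] using (summable_int_gaussian ht).div_const _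

/- Poisson summation writes `Φ t x` as a sum of Gaussians; the functional equation of the theta
kernels is this identity. -/
theorem Φ_nonneg (ht : 0 < t) (x : ℝ) : 0 ≤ Φ t x := by
  have heven : 0 ≤ HurwitzZeta.evenKernel ((x / (2 * π) : ℝ) : UnitAddCircle) (π / t) :=
    (HurwitzZeta.hasSum_int_evenKernel (x / (2 * π)) (t := π / t) (by positivity)).nonneg
      fun n ↦ (Real.exp_pos _).le
  rw [HurwitzZeta.evenKernel_functional_equation, one_div_div] at heven
  have hcos := nonneg_of_mul_nonneg_right heven (by positivity)
  rw [Φ_eq_cosKernel ht]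
  positivity

theorem Φ_neg (t x : ℝ) : Φ t (-x) = Φ t x := by
  simp [Φ]

theorem Φ_periodic (t : ℝ) : Function.Periodic (Φ t) (2 * π) := by
  intro x
  have hcos (n : ℕ) : Real.cos (((n : ℝ) + 1) * (x + 2 * π)) = Real.cos (((n : ℝ) + 1) * x) := by
    rw [mul_add, ← Nat.cast_succ, Real.cos_add_nat_mul_two_pi]
  simp only [Φ, hcos]

theorem continuous_Φ (ht : 0 < t) : Continuous (Φ t) := by
  have h : Continuous fun x ↦ (Φ t x : ℂ) := by
    simp_rw [fun x ↦ (hasSum_Φ ht x).tsum_eq.symm]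
    refine continuous_tsum (fun n ↦ by fun_prop) (summable_norm_Φ_term ht 0) fun n x ↦ ?_
    simp only [norm_div, norm_exp_neg_sq_mul_add_I_mul, le_refl]
  exact Complex.continuous_re.comp h

theorem exists_Φ_le (ht : 0 < t) : ∃ C, ∀ x, Φ t x ≤ C := by
  obtain ⟨C, hC⟩ := isBounded_iff_forall_norm_le.1
    ((Φ_periodic t).isBounded_of_continuous (by positivity) (continuous_Φ ht))
  exact ⟨C, fun x ↦ (le_abs_self _).trans (hC _ (Set.mem_range_self x))⟩

theorem integral_exp_I_int_mul (n : ℤ) :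
    ∫ z in (0 : ℝ)..(2 * π), Complex.exp (Complex.I * (n * z)) = if n = 0 then 2 * π else 0 := by
  split_ifs with hn
  · simp [hn]
  · have hperiod : Complex.exp (Complex.I * n * ((2 * π : ℝ) : ℂ)) = 1 := by
      rw [← Complex.exp_int_mul_two_pi_mul_I n]
      congr 1
      push_cast
      ring
    simp_rw [← mul_assoc]
    rw [integral_exp_mul_complex (by simpa using hn), hperiod]
    simp

end PeriodicHeatKernel

section FourierModes

variable {ι : Type*} [Fintype ι]

/-- Lebesgue measure on the fundamental domain `(0, 2π]^ι` of the torus `(ℝ / 2πℤ)^ι`. -/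
noncomputable abbrev periodMeasure (ι : Type*) [Fintype ι] : Measure (ι → ℝ) :=
  Measure.pi fun _ ↦ volume.restrict (Set.Ioc 0 (2 * π))

/-- The Fourier mode `ξ ↦ exp(i k·ξ)` of frequency `k`, a character of the torus. -/
noncomputable def fourierMode (k : ι → ℤ) (ξ : ι → ℝ) : ℂ :=
  ∏ j, Complex.exp (Complex.I * (k j * ξ j))

/-- The exponent `(t, ξ) ↦ -|k|² t + i k·ξ` of the solution of the heat equation with initial value
the Fourier mode of frequency `k`, as a linear form in time and space. -/
noncomputable def heatExponent (k : ι → ℤ) : ℝ × (ι → ℝ) →L[ℝ] ℂ :=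
  ∑ j, ((ContinuousLinearMap.fst ℝ ℝ (ι → ℝ)).smulRight (-(k j : ℂ) ^ 2) +
    ((ContinuousLinearMap.proj j).comp (ContinuousLinearMap.snd ℝ ℝ (ι → ℝ))).smulRight
      (Complex.I * k j))

/-- The Fourier coefficient of `f` at frequency `k` over the fundamental domain. -/
noncomputable def modeCoeff (f : (ι → ℝ) → ℂ) (k : ι → ℤ) : ℂ :=
  (∫ z, fourierMode (-k) z * f z ∂periodMeasure ι) / (2 * π) ^ Fintype.card ι

theorem continuous_fourierMode (k : ι → ℤ) : Continuous (fourierMode k) := by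
  unfold fourierMode
  fun_prop

theorem norm_fourierMode (k : ι → ℤ) (ξ : ι → ℝ) : ‖fourierMode k ξ‖ = 1 := by
  have h (j : ι) : ‖Complex.exp (Complex.I * (k j * ξ j))‖ = 1 := by
    simpa using norm_exp_neg_sq_mul_add_I_mul (k j) 0 (ξ j)
  simp [fourierMode, norm_prod, h]

theorem fourierMode_mul_fourierMode (k m : ι → ℤ) (ξ : ι → ℝ) :
    fourierMode k ξ * fourierMode m ξ = fourierMode (k + m) ξ := by
  simp only [fourierMode, ← Finset.prod_mul_distrib, ← Complex.exp_add, Pi.add_apply, Int.cast_add,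
    add_mul, mul_add]

theorem fourierMode_sub (k : ι → ℤ) (ξ z : ι → ℝ) :
    fourierMode k (ξ - z) = fourierMode k ξ * fourierMode (-k) z := by
  simp only [fourierMode, ← Finset.prod_mul_distrib, ← Complex.exp_add, Pi.sub_apply, Pi.neg_apply]
  refine Finset.prod_congr rfl fun j _ ↦ ?_
  push_cast
  ring_nf

theorem integrable_fourierMode (k : ι → ℤ) : Integrable (fourierMode k) (periodMeasure ι) :=
  .of_bound (continuous_fourierMode k).aestronglyMeasurable 1
    (ae_of_all _ fun ξ ↦ (norm_fourierMode k ξ).le)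

theorem integral_fourierMode (k : ι → ℤ) :
    ∫ z, fourierMode k z ∂periodMeasure ι = if k = 0 then (2 * π) ^ Fintype.card ι else 0 := by
  have hfactor (j : ι) : ∫ z in Set.Ioc 0 (2 * π), Complex.exp (Complex.I * (k j * z)) =
      if k j = 0 then 2 * π else 0 := by
    rw [← intervalIntegral.integral_of_le (by positivity), integral_exp_I_int_mul]
  simp only [fourierMode]
  rw [integral_fintype_prod_eq_prod (fun j (z : ℝ) ↦ Complex.exp (Complex.I * (k j * z)))]
  simp_rw [hfactor]
  split_ifs with hk
  · simp [hk]
  · obtain ⟨j, hj⟩ := Function.ne_iff.1 hk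
    exact Finset.prod_eq_zero (Finset.mem_univ j) (by simpa using hj)

theorem modeCoeff_fourierMode (m k : ι → ℤ) :
    modeCoeff (fourierMode m) k = if k = m then 1 else 0 := by
  simp_rw [modeCoeff, fourierMode_mul_fourierMode, integral_fourierMode, neg_add_eq_zero]
  split_ifs <;> simp

theorem norm_modeCoeff_le (f : (ι → ℝ) → ℂ) (k : ι → ℤ) :
    ‖modeCoeff f k‖ ≤ (∫ z, ‖f z‖ ∂periodMeasure ι) / (2 * π) ^ Fintype.card ι := by
  rw [modeCoeff, norm_div]
  gcongr
  · simpa [norm_fourierMode] using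
      norm_integral_le_integral_norm (μ := periodMeasure ι) fun z ↦ fourierMode (-k) z * f z
  · simp [abs_of_pos pi_pos]

theorem heatExponent_apply (k : ι → ℤ) (t : ℝ) (ξ : ι → ℝ) :
    heatExponent k (t, ξ) = ∑ j, (-(k j : ℂ) ^ 2 * t + Complex.I * (k j * ξ j)) := by
  simp only [heatExponent, sum_apply, add_apply, ContinuousLinearMap.smulRight_apply,
    ContinuousLinearMap.coe_fst', ContinuousLinearMap.comp_apply, ContinuousLinearMap.coe_snd',
    ContinuousLinearMap.proj_apply, Complex.real_smul]
  exact Finset.sum_congr rfl fun j _ ↦ by ring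

theorem exp_heatExponent (k : ι → ℤ) (t : ℝ) (ξ : ι → ℝ) :
    Complex.exp (heatExponent k (t, ξ)) =
      Complex.exp (-(∑ j, (k j : ℂ) ^ 2) * t) * fourierMode k ξ := by
  rw [heatExponent_apply, Finset.sum_add_distrib, Complex.exp_add, ← Finset.sum_mul,
    Finset.sum_neg_distrib, fourierMode, Complex.exp_sum]

theorem norm_exp_heatExponent (k : ι → ℤ) (t : ℝ) (ξ : ι → ℝ) :
    ‖Complex.exp (heatExponent k (t, ξ))‖ = ∏ j, Real.exp (-((k j : ℝ) ^ 2 * t)) := by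
  simp only [heatExponent_apply, Complex.exp_sum, norm_prod, norm_exp_neg_sq_mul_add_I_mul]

theorem heatExponent_time_eq_sum_sq [DecidableEq ι] (k : ι → ℤ) :
    heatExponent k (1, 0) = ∑ j, heatExponent k (0, Pi.single j 1) ^ 2 := by
  have hspace (j : ι) : heatExponent k (0, Pi.single j 1) = Complex.I * k j := by
    simp [heatExponent_apply, Pi.single_apply, apply_ite]
  simp [hspace, heatExponent_apply, mul_pow]

theorem norm_heatExponent_le (k : ι → ℤ) : ‖heatExponent k‖ ≤ 2 * ∑ j, (k j : ℝ) ^ 2 := by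
  refine ContinuousLinearMap.opNorm_le_bound _ (by positivity) fun ⟨t, ξ⟩ ↦ ?_
  have habs (n : ℤ) : |(n : ℝ)| ≤ (n : ℝ) ^ 2 := by
    exact_mod_cast Int.natAbs_le_self_sq n
  have hterm (j : ι) : ‖-(k j : ℂ) ^ 2 * t + Complex.I * (k j * ξ j)‖ ≤
      (k j : ℝ) ^ 2 * ‖(t, ξ)‖ + (k j : ℝ) ^ 2 * ‖(t, ξ)‖ := by
    refine (norm_add_le _ _).trans (add_le_add ?_ ?_)
    · have ht : |t| ≤ ‖(t, ξ)‖ := norm_fst_le (t, ξ)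
      simpa using mul_le_mul_of_nonneg_left ht (sq_nonneg (k j : ℝ))
    · have hξ : |ξ j| ≤ ‖(t, ξ)‖ := (norm_le_pi_norm ξ j).trans (norm_snd_le (t, ξ))
      simpa using mul_le_mul (habs (k j)) hξ (abs_nonneg _) (sq_nonneg _)
  rw [heatExponent_apply]
  calc ‖∑ j, (-(k j : ℂ) ^ 2 * t + Complex.I * (k j * ξ j))‖
      ≤ ∑ j, ((k j : ℝ) ^ 2 * ‖(t, ξ)‖ + (k j : ℝ) ^ 2 * ‖(t, ξ)‖) :=
        norm_sum_le_of_le _ fun j _ ↦ hterm j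
    _ = 2 * (∑ j, (k j : ℝ) ^ 2) * ‖(t, ξ)‖ := by
      rw [Finset.sum_add_distrib, ← Finset.sum_mul]
      ring

theorem summable_gaussian_pi {δ : ℝ} (hδ : 0 < δ) :
    Summable fun k : ι → ℤ ↦ ∏ j, Real.exp (-((k j : ℝ) ^ 2 * δ)) :=
  summable_pi_prod_of_nonneg (f := fun _ (n : ℤ) ↦ Real.exp (-((n : ℝ) ^ 2 * δ)))
    (fun _ _ ↦ (Real.exp_pos _).le) fun _ ↦ summable_int_gaussian hδ

/- Half of the Gaussian decay absorbs the polynomially growing moments. -/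
theorem moment_heatExponent_le (k : ι → ℤ) {δ : ℝ} (hδ : 0 < δ) (m : ℕ) :
    ‖heatExponent k‖ ^ m * ∏ j, Real.exp (-((k j : ℝ) ^ 2 * δ)) ≤
      (4 / δ) ^ m * m.factorial * ∏ j, Real.exp (-((k j : ℝ) ^ 2 * (δ / 2))) := by
  set N : ℝ := ∑ j, (k j : ℝ) ^ 2
  have hprod (c : ℝ) : ∏ j, Real.exp (-((k j : ℝ) ^ 2 * c)) = Real.exp (-(N * c)) := by
    rw [← Real.exp_sum, Finset.sum_neg_distrib, ← Finset.sum_mul]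
  have hexp : (N * (δ / 2)) ^ m ≤ m.factorial * Real.exp (N * (δ / 2)) :=
    (div_le_iff₀' (by positivity)).1 (Real.pow_div_factorial_le_exp _ (by positivity) m)
  rw [hprod, hprod]
  calc ‖heatExponent k‖ ^ m * Real.exp (-(N * δ))
      ≤ (2 * N) ^ m * Real.exp (-(N * δ)) := by gcongr; exact norm_heatExponent_le k
    _ = (4 / δ) ^ m * (N * (δ / 2)) ^ m * Real.exp (-(N * δ)) := by
      rw [← mul_pow]
      congr 2
      field_simp
      ring
    _ ≤ (4 / δ) ^ m * (m.factorial * Real.exp (N * (δ / 2))) * Real.exp (-(N * δ)) := by gcongr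
    _ = (4 / δ) ^ m * m.factorial * Real.exp (-(N * (δ / 2))) := by
      rw [show -(N * (δ / 2)) = N * (δ / 2) + -(N * δ) by ring, Real.exp_add]
      ring

theorem hasLocallySummableMoments_heatExponent {c : (ι → ℤ) → ℂ} {C : ℝ} (hc : ∀ k, ‖c k‖ ≤ C) :
    HasLocallySummableMoments heatExponent c (Set.Ioi 0 ×ˢ Set.univ) := by
  rintro ⟨t, ξ⟩ ⟨ht, -⟩ m
  have ht0 : 0 < t := ht
  have hC : 0 ≤ C := (norm_nonneg _).trans (hc 0)
  have hnear : ∀ᶠ q : ℝ × (ι → ℝ) in 𝓝 (t, ξ), t / 2 < q.1 :=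
    continuous_fst.continuousAt.eventually (lt_mem_nhds (half_lt_self ht0))
  refine ⟨_, (summable_gaussian_pi (ι := ι) (half_pos (half_pos ht0))).mul_left
    (C * ((4 / (t / 2)) ^ m * m.factorial)), hnear.mono fun ⟨s, η⟩ hs k ↦ ?_⟩
  rw [← Complex.norm_exp, norm_exp_heatExponent, mul_assoc, mul_assoc C]
  refine mul_le_mul (hc k) (le_trans ?_ (moment_heatExponent_le k (half_pos ht0) m))
    (by positivity) hC
  gcongr

end FourierModes

section HeatKernel

variable {ι : Type*} [Fintype ι] {t : ℝ}

/-- The periodic heat kernel on `ℝ^ι`; `Φ₃` is the case of three dimensions. -/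
noncomputable def torusHeatKernel (t : ℝ) (x : ι → ℝ) : ℝ :=
  ∏ j, Φ t (x j)

theorem torusHeatKernel_neg (t : ℝ) (x : ι → ℝ) :
    torusHeatKernel t (-x) = torusHeatKernel t x := by
  simp only [torusHeatKernel, Pi.neg_apply, Φ_neg]

theorem torusHeatKernel_nonneg (ht : 0 < t) (x : ι → ℝ) : 0 ≤ torusHeatKernel t x :=
  Finset.prod_nonneg fun j _ ↦ Φ_nonneg ht (x j)

theorem continuous_torusHeatKernel (ht : 0 < t) :
    Continuous (torusHeatKernel t : (ι → ℝ) → ℝ) :=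
  continuous_finsetProd _ fun j _ ↦ (continuous_Φ ht).comp (continuous_apply j)

theorem exists_norm_torusHeatKernel_le (ht : 0 < t) :
    ∃ C, ∀ x : ι → ℝ, ‖torusHeatKernel t x‖ ≤ C := by
  obtain ⟨C, hC⟩ := exists_Φ_le ht
  refine ⟨∏ _j : ι, C, fun x ↦ ?_⟩
  rw [Real.norm_of_nonneg (torusHeatKernel_nonneg ht x)]
  exact Finset.prod_le_prod (fun j _ ↦ Φ_nonneg ht (x j)) fun j _ ↦ hC (x j)

theorem hasSum_torusHeatKernel (ht : 0 < t) (x : ι → ℝ) :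
    HasSum (fun k ↦ Complex.exp (heatExponent k (t, x)) / (2 * π) ^ Fintype.card ι)
      (torusHeatKernel t x : ℂ) := by
  have h := hasSum_pi_prod (fun j ↦ hasSum_Φ ht (x j)) fun j ↦ summable_norm_Φ_term ht (x j)
  simpa only [torusHeatKernel, heatExponent_apply, Complex.exp_sum, Complex.ofReal_prod,
    Finset.prod_div_distrib, Finset.prod_const, Finset.card_univ] using h

end HeatKernel

section HeatFlow

variable {ι : Type*} [Fintype ι] {t : ℝ}

/-- The convolution of `f` with the periodic heat kernel over the fundamental domain. For `t > 0` it
is the periodic solution of the heat equation with initial value `f`. -/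
noncomputable def heatFlow {V : Type*} [NormedAddCommGroup V] [NormedSpace ℝ V] (t : ℝ)
    (f : (ι → ℝ) → V) (ξ : ι → ℝ) : V :=
  ∫ z, torusHeatKernel t (ξ - z) • f z ∂periodMeasure ι

theorem heatFlow_ofReal (t : ℝ) (f : (ι → ℝ) → ℝ) (ξ : ι → ℝ) :
    heatFlow t (fun z ↦ (f z : ℂ)) ξ = heatFlow t f ξ := by
  simp only [heatFlow, Complex.real_smul, smul_eq_mul, ← Complex.ofReal_mul,
    integral_complex_ofReal]

theorem heatFlow_const_mul (t : ℝ) (c : ℂ) (f : (ι → ℝ) → ℂ) (ξ : ι → ℝ) :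
    heatFlow t (fun z ↦ c * f z) ξ = c * heatFlow t f ξ := by
  simp only [heatFlow, ← mul_smul_comm, integral_const_mul]

section FourierExpansion

theorem heatFlow_eq_expSeries (ht : 0 < t) {f : (ι → ℝ) → ℂ}
    (hf : Integrable f (periodMeasure ι)) (ξ : ι → ℝ) :
    heatFlow t f ξ = expSeries heatExponent (modeCoeff f) (t, ξ) := by
  set c : ℂ := (2 * π) ^ Fintype.card ι with hc
  have hbound (k : ι → ℤ) (z : ι → ℝ) :
      ‖Complex.exp (heatExponent k (t, ξ - z)) / c * f z‖ =
        (∏ j, Real.exp (-((k j : ℝ) ^ 2 * t))) / ‖c‖ * ‖f z‖ := by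
    rw [norm_mul, norm_div, norm_exp_heatExponent]
  have hgauss := (summable_gaussian_pi (ι := ι) ht).div_const ‖c‖
  have hsum := hasSum_integral_of_dominated_convergence (μ := periodMeasure ι)
    (F := fun k z ↦ Complex.exp (heatExponent k (t, ξ - z)) / c * f z)
    (f := fun z ↦ torusHeatKernel t (ξ - z) * f z)
    (fun k z ↦ (∏ j, Real.exp (-((k j : ℝ) ^ 2 * t))) / ‖c‖ * ‖f z‖)
    (fun k ↦ Continuous.aestronglyMeasurable (by fun_prop) |>.mul hf.aestronglyMeasurable)
    (fun k ↦ ae_of_all _ fun z ↦ (hbound k z).le)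
    (ae_of_all _ fun z ↦ hgauss.mul_right _)
    (by simpa only [tsum_mul_right] using hf.norm.const_mul _)
    (ae_of_all _ fun z ↦ (hasSum_torusHeatKernel ht (ξ - z)).mul_right _)
  simp only [heatFlow, Complex.real_smul, expSeries, ← hsum.tsum_eq]
  refine tsum_congr fun k ↦ ?_
  rw [modeCoeff, smul_eq_mul, ← mul_div_assoc, mul_div_right_comm, ← hc, ← integral_const_mul]
  refine integral_congr_ae (ae_of_all _ fun z ↦ ?_)
  simp only [exp_heatExponent, fourierMode_sub]
  ring

theorem heatFlow_fourierMode (ht : 0 < t) (m : ι → ℤ) (ξ : ι → ℝ) :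
    heatFlow t (fourierMode m) ξ =
      Complex.exp (-(∑ j, (m j : ℂ) ^ 2) * t) * fourierMode m ξ := by
  classical
  rw [heatFlow_eq_expSeries ht (integrable_fourierMode m), expSeries, ← exp_heatExponent]
  simp_rw [modeCoeff_fourierMode, smul_eq_mul, mul_ite, mul_one, mul_zero]
  exact tsum_ite_eq m _

theorem hasLocallySummableMoments_modeCoeff (f : (ι → ℝ) → ℂ) :
    HasLocallySummableMoments heatExponent (modeCoeff f) (Set.Ioi 0 ×ˢ Set.univ) :=
  hasLocallySummableMoments_heatExponent (norm_modeCoeff_le f)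

end FourierExpansion

section HeatEquation

theorem deriv_complex_ofReal (g : ℝ → ℝ) :
    deriv (fun y ↦ (g y : ℂ)) = fun x ↦ ((deriv g x : ℝ) : ℂ) := by
  ext x
  by_cases hg : DifferentiableAt ℝ g x
  · exact hg.hasDerivAt.ofReal_comp.deriv
  · have hcomplex : ¬DifferentiableAt ℝ (fun y ↦ (g y : ℂ)) x := fun h ↦
      hg (Complex.reCLM.differentiableAt.comp x h)
    rw [deriv_zero_of_not_differentiableAt hg, deriv_zero_of_not_differentiableAt hcomplex,
      Complex.ofReal_zero]

theorem deriv_heatFlow_time (ht : 0 < t) {f : (ι → ℝ) → ℂ}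
    (hf : Integrable f (periodMeasure ι)) (ξ : ι → ℝ) :
    deriv (fun s ↦ heatFlow s f ξ) t =
      expSeries heatExponent (fun k ↦ heatExponent k (1, 0) • modeCoeff f k) (t, ξ) := by
  have hγ : HasDerivAt (fun s ↦ (s, ξ)) (1, 0) t := (hasDerivAt_id t).prodMk (hasDerivAt_const t ξ)
  refine (((hasLocallySummableMoments_modeCoeff f).hasDerivAt_comp hγ
    ⟨ht, trivial⟩).congr_of_eventuallyEq ?_).deriv
  filter_upwards [lt_mem_nhds ht] with s hs
  exact heatFlow_eq_expSeries hs hf ξ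

theorem deriv_deriv_heatFlow_update [DecidableEq ι] (ht : 0 < t) {f : (ι → ℝ) → ℂ}
    (hf : Integrable f (periodMeasure ι)) (ξ : ι → ℝ) (j : ι) :
    deriv (deriv fun y ↦ heatFlow t f (Function.update ξ j y)) (ξ j) =
      expSeries heatExponent
        (fun k ↦ heatExponent k (0, Pi.single j 1) ^ 2 • modeCoeff f k) (t, ξ) := by
  have hγ (y : ℝ) : HasDerivAt (fun y ↦ (t, Function.update ξ j y)) (0, Pi.single j 1) y :=
    (hasDerivAt_const y t).prodMk (hasDerivAt_update ξ j y)
  have hmoments := hasLocallySummableMoments_modeCoeff f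
  have hfirst : (deriv fun y ↦ heatFlow t f (Function.update ξ j y)) = fun y ↦
      expSeries heatExponent (fun k ↦ heatExponent k (0, Pi.single j 1) • modeCoeff f k)
        (t, Function.update ξ j y) := by
    simp_rw [heatFlow_eq_expSeries ht hf]
    exact funext fun y ↦ (hmoments.hasDerivAt_comp (hγ y) ⟨ht, trivial⟩).deriv
  rw [hfirst, ((hmoments.apply_smul _).hasDerivAt_comp (hγ (ξ j)) ⟨ht, trivial⟩).deriv]
  simp only [smul_smul, ← sq, Function.update_eq_self]

theorem deriv_heatFlow_complex [DecidableEq ι] (ht : 0 < t) {f : (ι → ℝ) → ℂ}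
    (hf : Integrable f (periodMeasure ι)) (ξ : ι → ℝ) :
    deriv (fun s ↦ heatFlow s f ξ) t =
      ∑ j, deriv (deriv fun y ↦ heatFlow t f (Function.update ξ j y)) (ξ j) := by
  have hsummable (j : ι) : Summable fun k ↦ Complex.exp (heatExponent k (t, ξ)) •
      heatExponent k (0, Pi.single j 1) ^ 2 • modeCoeff f k := by
    simpa only [smul_smul, ← sq] using (((hasLocallySummableMoments_modeCoeff f).apply_smul
      (0, Pi.single j 1)).apply_smul (0, Pi.single j 1)).summable (p := (t, ξ)) ⟨ht, trivial⟩
  simp_rw [deriv_heatFlow_time ht hf, deriv_deriv_heatFlow_update ht hf, expSeries]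
  rw [← Summable.tsum_finsetSum fun j _ ↦ hsummable j]
  simp_rw [heatExponent_time_eq_sum_sq, Finset.sum_smul, Finset.smul_sum]

theorem deriv_heatFlow [DecidableEq ι] (ht : 0 < t) {f : (ι → ℝ) → ℝ}
    (hf : Integrable f (periodMeasure ι)) (ξ : ι → ℝ) :
    deriv (fun s ↦ heatFlow s f ξ) t =
      ∑ j, deriv (deriv fun y ↦ heatFlow t f (Function.update ξ j y)) (ξ j) := by
  have h := deriv_heatFlow_complex ht hf.ofReal ξ
  simp only [Complex.coe_algebraMap, heatFlow_ofReal] at h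
  simp_rw [deriv_complex_ofReal] at h
  exact_mod_cast h

end HeatEquation

section Contraction

variable {V : Type*} [NormedAddCommGroup V] [NormedSpace ℝ V] {f g : (ι → ℝ) → V}

theorem integrable_torusHeatKernel_smul (ht : 0 < t) (hf : Integrable f (periodMeasure ι))
    (ξ : ι → ℝ) : Integrable (fun z ↦ torusHeatKernel t (ξ - z) • f z) (periodMeasure ι) := by
  obtain ⟨C, hC⟩ := exists_norm_torusHeatKernel_le (ι := ι) ht
  exact hf.bdd_smul C ((continuous_torusHeatKernel ht).comp (by fun_prop)).aestronglyMeasurable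
    (ae_of_all _ fun z ↦ hC (ξ - z))

theorem integrable_prod_torusHeatKernel_smul (ht : 0 < t) (hf : Integrable f (periodMeasure ι)) :
    Integrable (Function.uncurry fun ξ z ↦ torusHeatKernel t (ξ - z) • f z)
      ((periodMeasure ι).prod (periodMeasure ι)) := by
  obtain ⟨C, hC⟩ := exists_norm_torusHeatKernel_le (ι := ι) ht
  have hcont : Continuous fun p : (ι → ℝ) × (ι → ℝ) ↦ torusHeatKernel t (p.1 - p.2) :=
    (continuous_torusHeatKernel ht).comp (by fun_prop)
  exact (hf.comp_snd _).bdd_smul C hcont.aestronglyMeasurable (ae_of_all _ fun p ↦ hC _)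

theorem heatFlow_add (ht : 0 < t) (hf : Integrable f (periodMeasure ι))
    (hg : Integrable g (periodMeasure ι)) : heatFlow t (f + g) = heatFlow t f + heatFlow t g := by
  ext ξ
  simp only [heatFlow, Pi.add_apply, smul_add]
  exact integral_add (integrable_torusHeatKernel_smul ht hf ξ)
    (integrable_torusHeatKernel_smul ht hg ξ)

theorem integrable_heatFlow (ht : 0 < t) (hf : Integrable f (periodMeasure ι)) :
    Integrable (heatFlow t f) (periodMeasure ι) :=
  (integrable_prod_torusHeatKernel_smul ht hf).integral_prod_left

theorem integral_torusHeatKernel_sub (ht : 0 < t) (z : ι → ℝ) :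
    ∫ ξ, torusHeatKernel t (ξ - z) ∂periodMeasure ι = 1 := by
  have hmode : (fun _ ↦ ((1 : ℝ) : ℂ)) = fourierMode (0 : ι → ℤ) := by
    ext
    simp [fourierMode]
  have hone : heatFlow t (fun _ ↦ (1 : ℝ)) z = 1 := by
    rw [← Complex.ofReal_inj, ← heatFlow_ofReal, hmode, heatFlow_fourierMode ht]
    simp [fourierMode]
  simp_rw [← torusHeatKernel_neg t (_ - z), neg_sub]
  simpa [heatFlow] using hone

theorem integral_norm_heatFlow_le (ht : 0 < t) (hf : Integrable f (periodMeasure ι)) :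
    ∫ ξ, ‖heatFlow t f ξ‖ ∂periodMeasure ι ≤ ∫ z, ‖f z‖ ∂periodMeasure ι := by
  have hint := (integrable_prod_torusHeatKernel_smul ht hf).norm
  calc ∫ ξ, ‖heatFlow t f ξ‖ ∂periodMeasure ι
      ≤ ∫ ξ, ∫ z, ‖torusHeatKernel t (ξ - z) • f z‖ ∂periodMeasure ι ∂periodMeasure ι :=
        integral_mono (integrable_heatFlow ht hf).norm hint.integral_prod_left
          fun ξ ↦ norm_integral_le_integral_norm _
    _ = ∫ z, ∫ ξ, ‖torusHeatKernel t (ξ - z) • f z‖ ∂periodMeasure ι ∂periodMeasure ι :=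
        integral_integral_swap hint
    _ = ∫ z, ‖f z‖ ∂periodMeasure ι := by
      simp_rw [norm_smul, Real.norm_of_nonneg (torusHeatKernel_nonneg ht _), integral_mul_const,
        integral_torusHeatKernel_sub ht, one_mul]

end Contraction

end HeatFlow

section Smoothness

variable {ι : Type} [Fintype ι]

theorem contDiffOn_heatFlow_complex {f : (ι → ℝ) → ℂ} (hf : Integrable f (periodMeasure ι)) :
    ContDiffOn ℝ (⊤ : ℕ∞) (fun p : ℝ × (ι → ℝ) ↦ heatFlow p.1 f p.2) (Set.Ioi 0 ×ˢ Set.univ) :=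
  ((hasLocallySummableMoments_modeCoeff f).contDiffOn (isOpen_Ioi.prod isOpen_univ)).congr
    fun p hp ↦ heatFlow_eq_expSeries hp.1 hf p.2

theorem contDiffOn_heatFlow {f : (ι → ℝ) → ℝ} (hf : Integrable f (periodMeasure ι)) :
    ContDiffOn ℝ (⊤ : ℕ∞) (fun p : ℝ × (ι → ℝ) ↦ heatFlow p.1 f p.2) (Set.Ioi 0 ×ˢ Set.univ) := by
  have h := Complex.reCLM.contDiff.comp_contDiffOn (contDiffOn_heatFlow_complex hf.ofReal)
  refine h.congr fun p _ ↦ ?_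
  simp [heatFlow_ofReal]

end Smoothness

section InitialTrace

variable {ι : Type*} [Fintype ι] {V : Type*} [NormedAddCommGroup V] [NormedSpace ℝ V]
  {f g : (ι → ℝ) → V} {t : ℝ}

/-- The heat flow started at `f` attains its initial value `f` in `L¹` of the torus as time tends to
zero from above. -/
def HasL1InitialTrace (f : (ι → ℝ) → V) : Prop :=
  Tendsto (fun t ↦ ∫ ξ, ‖heatFlow t f ξ - f ξ‖ ∂periodMeasure ι) (𝓝[>] 0) (𝓝 0)

theorem hasL1InitialTrace_ofReal_iff {f : (ι → ℝ) → ℝ} :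
    HasL1InitialTrace (fun z ↦ (f z : ℂ)) ↔ HasL1InitialTrace f := by
  simp only [HasL1InitialTrace, heatFlow_ofReal, ← Complex.ofReal_sub, Complex.norm_real]

theorem integral_norm_heatFlow_sub_self_add_le (ht : 0 < t) (hf : Integrable f (periodMeasure ι))
    (hg : Integrable g (periodMeasure ι)) :
    ∫ ξ, ‖heatFlow t (f + g) ξ - (f + g) ξ‖ ∂periodMeasure ι ≤
      (∫ ξ, ‖heatFlow t f ξ - f ξ‖ ∂periodMeasure ι) +
        ∫ ξ, ‖heatFlow t g ξ - g ξ‖ ∂periodMeasure ι := by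
  have hf' := ((integrable_heatFlow ht hf).sub hf).norm
  have hg' := ((integrable_heatFlow ht hg).sub hg).norm
  refine (integral_mono ((integrable_heatFlow ht (hf.add hg)).sub (hf.add hg)).norm
    (hf'.add hg') fun ξ ↦ ?_).trans_eq (integral_add hf' hg')
  simp only [heatFlow_add ht hf hg, Pi.add_apply, Pi.sub_apply, add_sub_add_comm]
  exact norm_add_le _ _

theorem integral_norm_heatFlow_sub_self_le (ht : 0 < t) (hf : Integrable f (periodMeasure ι)) :
    ∫ ξ, ‖heatFlow t f ξ - f ξ‖ ∂periodMeasure ι ≤ 2 * ∫ z, ‖f z‖ ∂periodMeasure ι := by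
  have hflow := integrable_heatFlow ht hf
  calc ∫ ξ, ‖heatFlow t f ξ - f ξ‖ ∂periodMeasure ι
      ≤ ∫ ξ, (‖heatFlow t f ξ‖ + ‖f ξ‖) ∂periodMeasure ι :=
        integral_mono (hflow.sub hf).norm (hflow.norm.add hf.norm) fun ξ ↦ norm_sub_le _ _
    _ = (∫ ξ, ‖heatFlow t f ξ‖ ∂periodMeasure ι) + ∫ z, ‖f z‖ ∂periodMeasure ι :=
        integral_add hflow.norm hf.norm
    _ ≤ 2 * ∫ z, ‖f z‖ ∂periodMeasure ι := by linarith [integral_norm_heatFlow_le ht hf]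

namespace HasL1InitialTrace

theorem add (hf : HasL1InitialTrace f) (hg : HasL1InitialTrace g)
    (hfi : Integrable f (periodMeasure ι)) (hgi : Integrable g (periodMeasure ι)) :
    HasL1InitialTrace (f + g) := by
  refine squeeze_zero' (.of_forall fun t ↦ integral_nonneg fun _ ↦ norm_nonneg _) ?_
    (by simpa only [add_zero] using Tendsto.add hf hg)
  filter_upwards [self_mem_nhdsWithin] with t ht
  exact integral_norm_heatFlow_sub_self_add_le ht hfi hgi

theorem const_mul {f : (ι → ℝ) → ℂ} (hf : HasL1InitialTrace f) (c : ℂ) :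
    HasL1InitialTrace fun z ↦ c * f z := by
  simpa only [HasL1InitialTrace, heatFlow_const_mul, ← mul_sub, norm_mul, integral_const_mul,
    mul_zero] using Tendsto.const_mul ‖c‖ hf

theorem of_forall_exists_integral_norm_sub_le (hf : Integrable f (periodMeasure ι))
    (happrox : ∀ ε > 0, ∃ g, Integrable g (periodMeasure ι) ∧ HasL1InitialTrace g ∧
      ∫ z, ‖f z - g z‖ ∂periodMeasure ι ≤ ε) : HasL1InitialTrace f := by
  refine tendsto_order.2 ⟨fun a ha ↦ .of_forall fun t ↦
    ha.trans_le (integral_nonneg fun _ ↦ norm_nonneg _), fun ε hε ↦ ?_⟩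
  obtain ⟨g, hgi, hg, hfg⟩ := happrox (ε / 4) (by positivity)
  filter_upwards [self_mem_nhdsWithin, hg.eventually_lt_const (by positivity : 0 < ε / 4)]
    with t ht hclose
  have hsplit := integral_norm_heatFlow_sub_self_add_le ht hgi (hf.sub hgi)
  rw [add_sub_cancel] at hsplit
  have herror := integral_norm_heatFlow_sub_self_le ht (hf.sub hgi)
  simp only [Pi.sub_apply] at hsplit herror
  linarith

end HasL1InitialTrace

theorem hasL1InitialTrace_fourierMode (k : ι → ℤ) : HasL1InitialTrace (fourierMode k) := by
  set multiplier : ℝ → ℂ := fun t ↦ Complex.exp (-(∑ j, (k j : ℂ) ^ 2) * t)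
  have hcont : Continuous fun t ↦
      (periodMeasure ι).real Set.univ * ‖multiplier t - 1‖ := by fun_prop
  have hlim : Tendsto (fun t ↦ (periodMeasure ι).real Set.univ * ‖multiplier t - 1‖)
      (𝓝[>] 0) (𝓝 0) := by
    simpa [multiplier] using (hcont.tendsto 0).mono_left nhdsWithin_le_nhds
  refine hlim.congr' ?_
  filter_upwards [self_mem_nhdsWithin] with t ht
  simp_rw [heatFlow_fourierMode ht, ← sub_one_mul, norm_mul, norm_fourierMode, mul_one,
    integral_const, smul_eq_mul, multiplier]

end InitialTrace

section TorusDensity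

variable {ι : Type*}

/-- The point of the torus `(ℝ / ℤ)^ι` represented by `z`, after rescaling the period `2π` to
`1`. -/
noncomputable def torusMk (z : ι → ℝ) : UnitAddTorus ι :=
  fun j ↦ (z j / (2 * π) : ℝ)

/-- The representative in the fundamental domain `(0, 2π]^ι` of a point of the torus. -/
noncomputable def torusRepr (a : UnitAddTorus ι) : ι → ℝ :=
  fun j ↦ 2 * π * AddCircle.measurableEquivIoc 1 0 (a j)

theorem continuous_torusMk : Continuous (torusMk : (ι → ℝ) → UnitAddTorus ι) :=
  continuous_pi fun _ ↦ (AddCircle.continuous_mk' 1).comp (by fun_prop)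

theorem measurable_torusRepr : Measurable (torusRepr : UnitAddTorus ι → ι → ℝ) :=
  measurable_pi_lambda _ fun j ↦ (measurable_subtype_coe.comp
    ((AddCircle.measurableEquivIoc 1 0).measurable.comp (measurable_pi_apply j))).const_mul _

theorem torusRepr_torusMk {z : ι → ℝ} (hz : ∀ j, z j ∈ Set.Ioc 0 (2 * π)) :
    torusRepr (torusMk z) = z := by
  ext j
  have hmem : z j / (2 * π) ∈ Set.Ioc (0 : ℝ) (0 + 1) :=
    ⟨div_pos (hz j).1 two_pi_pos, by simpa using (div_le_one two_pi_pos).2 (hz j).2⟩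
  have hrepr : (AddCircle.equivIoc 1 0 (torusMk z j) : ℝ) = z j / (2 * π) := by
    rw [torusMk, AddCircle.equivIoc_coe_of_mem hmem]
  exact (congrArg (2 * π * ·) hrepr).trans (mul_div_cancel₀ _ two_pi_pos.ne')

variable [Fintype ι]

theorem ae_torusRepr_torusMk :
    (fun z ↦ torusRepr (torusMk z)) =ᵐ[periodMeasure ι] id := by
  have hmem : ∀ᵐ z ∂periodMeasure ι, ∀ j, z j ∈ Set.Ioc 0 (2 * π) :=
    eventually_all.2 fun j ↦ Measure.tendsto_eval_ae_ae.eventually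
      (ae_restrict_mem measurableSet_Ioc)
  exact hmem.mono fun z ↦ torusRepr_torusMk

theorem measurePreserving_torusRepr :
    MeasurePreserving torusRepr ((periodMeasure ι).map torusMk) (periodMeasure ι) where
  measurable := measurable_torusRepr
  map_eq := by
    rw [Measure.map_map measurable_torusRepr continuous_torusMk.measurable]
    exact (Measure.map_congr ae_torusRepr_torusMk).trans Measure.map_id

theorem mFourier_torusMk (k : ι → ℤ) (z : ι → ℝ) :
    UnitAddTorus.mFourier k (torusMk z) = fourierMode k z := by
  refine Finset.prod_congr rfl fun j _ ↦ ?_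
  rw [torusMk, fourier_coe_apply]
  congr 1
  push_cast
  field_simp

theorem exists_mem_span_mFourier_integral_norm_sub_le {μ : Measure (UnitAddTorus ι)}
    [IsFiniteMeasure μ] {f : UnitAddTorus ι → ℂ} (hf : Integrable f μ) {ε : ℝ} (hε : 0 < ε) :
    ∃ p ∈ Submodule.span ℂ (Set.range (UnitAddTorus.mFourier (d := ι))),
      ∫ a, ‖f a - p a‖ ∂μ ≤ ε := by
  obtain ⟨g, hfg, hg⟩ := hf.exists_boundedContinuous_integral_sub_le (half_pos hε)
  set δ := ε / 2 / (μ.real Set.univ + 1) with hδ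
  have hdense : g.toContinuousMap ∈
      (Submodule.span ℂ (Set.range (UnitAddTorus.mFourier (d := ι)))).topologicalClosure :=
    UnitAddTorus.span_mFourier_closure_eq_top (d := ι) ▸ Submodule.mem_top
  obtain ⟨p, hp, hgp⟩ := Metric.mem_closure_iff.1 hdense δ (by positivity)
  have hpi : Integrable p μ := p.continuous.integrable_of_hasCompactSupport (.of_compactSpace p)
  have hunif : ∫ a, ‖g a - p a‖ ∂μ ≤ ε / 2 := by
    calc ∫ a, ‖g a - p a‖ ∂μ
        ≤ ∫ _, δ ∂μ := integral_mono (hg.sub hpi).norm (integrable_const δ) fun a ↦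
          ((g.toContinuousMap - p).norm_coe_le_norm a).trans (dist_eq_norm _ p ▸ hgp.le)
      _ = μ.real Set.univ * δ := by rw [integral_const, smul_eq_mul]
      _ ≤ (μ.real Set.univ + 1) * δ := by gcongr; linarith
      _ = ε / 2 := by rw [hδ]; field_simp
  refine ⟨p, hp, ?_⟩
  calc ∫ a, ‖f a - p a‖ ∂μ
      ≤ ∫ a, (‖f a - g a‖ + ‖g a - p a‖) ∂μ :=
        integral_mono (hf.sub hpi).norm ((hf.sub hg).norm.add (hg.sub hpi).norm) fun a ↦
          norm_sub_le_norm_sub_add_norm_sub _ _ _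
    _ = (∫ a, ‖f a - g a‖ ∂μ) + ∫ a, ‖g a - p a‖ ∂μ :=
        integral_add (hf.sub hg).norm (hg.sub hpi).norm
    _ ≤ ε := by linarith

theorem integrable_comp_torusMk (p : C(UnitAddTorus ι, ℂ)) :
    Integrable (fun z ↦ p (torusMk z)) (periodMeasure ι) :=
  .of_bound (p.continuous.comp continuous_torusMk).aestronglyMeasurable ‖p‖
    (ae_of_all _ fun _ ↦ p.norm_coe_le_norm _)

theorem hasL1InitialTrace_of_mem_span_mFourier {p : C(UnitAddTorus ι, ℂ)}
    (hp : p ∈ Submodule.span ℂ (Set.range (UnitAddTorus.mFourier (d := ι)))) :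
    HasL1InitialTrace fun z ↦ p (torusMk z) := by
  induction hp using Submodule.span_induction with
  | mem p hp =>
    obtain ⟨k, rfl⟩ := hp
    simpa only [mFourier_torusMk] using hasL1InitialTrace_fourierMode k
  | zero => simpa using (hasL1InitialTrace_fourierMode (0 : ι → ℤ)).const_mul 0
  | add p q _ _ hp hq => exact hp.add hq (integrable_comp_torusMk p) (integrable_comp_torusMk q)
  | smul c p _ hp => exact hp.const_mul c

theorem hasL1InitialTrace_complex {f : (ι → ℝ) → ℂ} (hf : Integrable f (periodMeasure ι)) :
    HasL1InitialTrace f := by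
  refine .of_forall_exists_integral_norm_sub_le hf fun ε hε ↦ ?_
  have hrepr := measurePreserving_torusRepr.integrable_comp_of_integrable hf
  obtain ⟨p, hp, hfp⟩ := exists_mem_span_mFourier_integral_norm_sub_le hrepr hε
  refine ⟨fun z ↦ p (torusMk z), integrable_comp_torusMk p,
    hasL1InitialTrace_of_mem_span_mFourier hp, ?_⟩
  have hmeas := (hrepr.aestronglyMeasurable.sub p.continuous.aestronglyMeasurable).norm
  simp only [Pi.sub_apply] at hmeas
  rw [integral_map continuous_torusMk.aemeasurable hmeas] at hfp
  refine (integral_congr_ae ?_).trans_le hfp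
  filter_upwards [ae_torusRepr_torusMk] with z hz
  rw [Function.comp_apply, hz, id]

theorem hasL1InitialTrace {f : (ι → ℝ) → ℝ} (hf : Integrable f (periodMeasure ι)) :
    HasL1InitialTrace f :=
  hasL1InitialTrace_ofReal_iff.1 (hasL1InitialTrace_complex hf.ofReal)

end TorusDensity

section ThreeDimensions

section FinThree

variable {α E : Type*} [MeasurableSpace α] [NormedAddCommGroup E] {μ : Measure α} [SigmaFinite μ]

theorem measurePreserving_fin_three (μ : Measure α) [SigmaFinite μ] :
    MeasurePreserving (fun z : Fin 3 → α ↦ (z 0, z 1, z 2)) (Measure.pi fun _ ↦ μ)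
      (μ.prod (μ.prod μ)) :=
  ((MeasurePreserving.id μ).prod (measurePreserving_finTwoArrow μ)).comp
    (measurePreserving_piFinSuccAbove (fun _ : Fin 3 ↦ μ) 0)

theorem integrable_fin_three_iff {f : α × α × α → E} :
    Integrable (fun z : Fin 3 → α ↦ f (z 0, z 1, z 2)) (Measure.pi fun _ ↦ μ) ↔
      Integrable f (μ.prod (μ.prod μ)) :=
  (measurePreserving_fin_three μ).integrable_comp_emb
    (((MeasurableEquiv.refl α).prodCongr .finTwoArrow).measurableEmbedding.comp
      (MeasurableEquiv.piFinSuccAbove (fun _ : Fin 3 ↦ α) 0).measurableEmbedding)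

theorem integral_fin_three [NormedSpace ℝ E] {f : α × α × α → E}
    (hf : Integrable (fun z : Fin 3 → α ↦ f (z 0, z 1, z 2)) (Measure.pi fun _ ↦ μ)) :
    ∫ z : Fin 3 → α, f (z 0, z 1, z 2) ∂Measure.pi (fun _ ↦ μ) =
      ∫ a, ∫ b, ∫ c, f (a, b, c) ∂μ ∂μ ∂μ := by
  have hpres := measurePreserving_fin_three μ
  have hprod := integrable_fin_three_iff.1 hf
  rw [← integral_map hpres.aemeasurable (hpres.map_eq.symm ▸ hprod.aestronglyMeasurable),
    hpres.map_eq, integral_prod f hprod]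
  refine integral_congr_ae ?_
  filter_upwards [hprod.prod_right_ae] with a ha
  exact integral_prod _ ha

end FinThree

theorem intervalIntegral_eq_integral_periodMeasure {E : Type*} [NormedAddCommGroup E]
    [NormedSpace ℝ E] {f : ℝ × ℝ × ℝ → E}
    (hf : Integrable (fun z : Fin 3 → ℝ ↦ f (z 0, z 1, z 2)) (periodMeasure (Fin 3))) :
    ∫ z₁ in (0 : ℝ)..(2 * π), ∫ z₂ in (0 : ℝ)..(2 * π), ∫ z₃ in (0 : ℝ)..(2 * π),
      f (z₁, z₂, z₃) = ∫ z, f (z 0, z 1, z 2) ∂periodMeasure (Fin 3) := by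
  simp_rw [intervalIntegral.integral_of_le two_pi_pos.le]
  exact (integral_fin_three hf).symm

theorem Φ₃_eq_torusHeatKernel (t : ℝ) (x : Fin 3 → ℝ) :
    Φ₃ t (x 0) (x 1) (x 2) = torusHeatKernel t x := by
  rw [Φ₃, torusHeatKernel, Fin.prod_univ_three]

section Solution

variable {ψ : ℝ × ℝ × ℝ → ℝ} {t : ℝ}

theorem Ψ₃_eq_heatFlow (ht : 0 < t)
    (hψ : Integrable (fun z : Fin 3 → ℝ ↦ ψ (z 0, z 1, z 2)) (periodMeasure (Fin 3)))
    (ξ : Fin 3 → ℝ) :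
    Ψ₃ ψ t (ξ 0) (ξ 1) (ξ 2) = heatFlow t (fun z ↦ ψ (z 0, z 1, z 2)) ξ := by
  have hint := integrable_torusHeatKernel_smul ht hψ ξ
  simp_rw [heatFlow, ← Φ₃_eq_torusHeatKernel] at hint ⊢
  exact intervalIntegral_eq_integral_periodMeasure
    (f := fun p ↦ Φ₃ t (ξ 0 - p.1) (ξ 1 - p.2.1) (ξ 2 - p.2.2) * ψ p) hint

theorem contDiffOn_Ψ₃
    (hψ : Integrable (fun z : Fin 3 → ℝ ↦ ψ (z 0, z 1, z 2)) (periodMeasure (Fin 3))) :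
    ContDiffOn ℝ (⊤ : ℕ∞) (fun p : ℝ × ℝ × ℝ × ℝ ↦ Ψ₃ ψ p.1 p.2.1 p.2.2.1 p.2.2.2)
      (Set.Ioi 0 ×ˢ Set.univ) := by
  have hcoord : ContDiff ℝ (⊤ : ℕ∞) fun p : ℝ × ℝ × ℝ × ℝ ↦
      (p.1, ![p.2.1, p.2.2.1, p.2.2.2]) := by
    refine contDiff_fst.prodMk (contDiff_pi.2 ?_)
    simp only [Fin.forall_fin_succ, Matrix.cons_val_zero, Matrix.cons_val_succ]
    exact ⟨by fun_prop, by fun_prop, by fun_prop, fun j ↦ j.elim0⟩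
  exact ((contDiffOn_heatFlow hψ).comp hcoord.contDiffOn fun p hp ↦ ⟨hp.1, trivial⟩).congr
    fun p hp ↦ Ψ₃_eq_heatFlow hp.1 hψ ![p.2.1, p.2.2.1, p.2.2.2]

theorem Ψ₃_periodic (ψ : ℝ × ℝ × ℝ → ℝ) (t ξ₁ ξ₂ ξ₃ : ℝ) :
    Ψ₃ ψ t (ξ₁ + 2 * π) ξ₂ ξ₃ = Ψ₃ ψ t ξ₁ ξ₂ ξ₃ ∧
      Ψ₃ ψ t ξ₁ (ξ₂ + 2 * π) ξ₃ = Ψ₃ ψ t ξ₁ ξ₂ ξ₃ ∧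
      Ψ₃ ψ t ξ₁ ξ₂ (ξ₃ + 2 * π) = Ψ₃ ψ t ξ₁ ξ₂ ξ₃ := by
  refine ⟨?_, ?_, ?_⟩ <;>
    simp only [Ψ₃, Φ₃, add_sub_right_comm, Φ_periodic t _]

theorem deriv_Ψ₃ (ht : 0 < t)
    (hψ : Integrable (fun z : Fin 3 → ℝ ↦ ψ (z 0, z 1, z 2)) (periodMeasure (Fin 3)))
    (ξ₁ ξ₂ ξ₃ : ℝ) :
    deriv (fun s ↦ Ψ₃ ψ s ξ₁ ξ₂ ξ₃) t =
      deriv (deriv fun y ↦ Ψ₃ ψ t y ξ₂ ξ₃) ξ₁ + deriv (deriv fun y ↦ Ψ₃ ψ t ξ₁ y ξ₃) ξ₂ +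
        deriv (deriv fun y ↦ Ψ₃ ψ t ξ₁ ξ₂ y) ξ₃ := by
  have htime : (fun s ↦ Ψ₃ ψ s ξ₁ ξ₂ ξ₃) =ᶠ[𝓝 t]
      fun s ↦ heatFlow s (fun z ↦ ψ (z 0, z 1, z 2)) ![ξ₁, ξ₂, ξ₃] :=
    (lt_mem_nhds ht).mono fun s hs ↦ Ψ₃_eq_heatFlow hs hψ ![ξ₁, ξ₂, ξ₃]
  rw [htime.deriv_eq, deriv_heatFlow ht hψ, Fin.sum_univ_three]
  simp [← Ψ₃_eq_heatFlow ht hψ]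

theorem tendsto_integral_abs_Ψ₃_sub
    (hψ : Integrable (fun z : Fin 3 → ℝ ↦ ψ (z 0, z 1, z 2)) (periodMeasure (Fin 3))) :
    Tendsto (fun t : ℝ ↦ ∫ ξ₁ in (0 : ℝ)..(2 * π), ∫ ξ₂ in (0 : ℝ)..(2 * π),
        ∫ ξ₃ in (0 : ℝ)..(2 * π), |Ψ₃ ψ t ξ₁ ξ₂ ξ₃ - ψ (ξ₁, ξ₂, ξ₃)|)
      (𝓝[>] 0) (𝓝 0) := by
  refine (hasL1InitialTrace hψ).congr' ?_
  filter_upwards [self_mem_nhdsWithin] with t ht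
  have hdiff (ξ : Fin 3 → ℝ) :
      ‖heatFlow t (fun z ↦ ψ (z 0, z 1, z 2)) ξ - ψ (ξ 0, ξ 1, ξ 2)‖ =
        |Ψ₃ ψ t (ξ 0) (ξ 1) (ξ 2) - ψ (ξ 0, ξ 1, ξ 2)| := by
    rw [Ψ₃_eq_heatFlow ht hψ, Real.norm_eq_abs]
  have hint := ((integrable_heatFlow ht hψ).sub hψ).norm
  simp only [Pi.sub_apply, hdiff] at hint
  simp_rw [hdiff]
  exact (intervalIntegral_eq_integral_periodMeasure
    (f := fun p ↦ |Ψ₃ ψ t p.1 p.2.1 p.2.2 - ψ p|) hint).symm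

end Solution

end ThreeDimensions

theorem statement_18_general (ψ : ℝ × ℝ × ℝ → ℝ)
    (hint : IntegrableOn ψ
      (Set.Icc (0 : ℝ) (2 * π) ×ˢ Set.Icc (0 : ℝ) (2 * π) ×ˢ Set.Icc (0 : ℝ) (2 * π))) :
    ContDiffOn ℝ (⊤ : ℕ∞) (fun p : ℝ × ℝ × ℝ × ℝ ↦ Ψ₃ ψ p.1 p.2.1 p.2.2.1 p.2.2.2)
      (Set.Ioi (0 : ℝ) ×ˢ (Set.univ : Set (ℝ × ℝ × ℝ))) ∧
    (∀ t ξ₁ ξ₂ ξ₃ : ℝ, 0 < t →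
      Ψ₃ ψ t (ξ₁ + 2 * π) ξ₂ ξ₃ = Ψ₃ ψ t ξ₁ ξ₂ ξ₃ ∧
      Ψ₃ ψ t ξ₁ (ξ₂ + 2 * π) ξ₃ = Ψ₃ ψ t ξ₁ ξ₂ ξ₃ ∧
      Ψ₃ ψ t ξ₁ ξ₂ (ξ₃ + 2 * π) = Ψ₃ ψ t ξ₁ ξ₂ ξ₃) ∧
    (∀ t ξ₁ ξ₂ ξ₃ : ℝ, 0 < t →
      deriv (fun s : ℝ ↦ Ψ₃ ψ s ξ₁ ξ₂ ξ₃) t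
        = deriv (deriv (fun y : ℝ ↦ Ψ₃ ψ t y ξ₂ ξ₃)) ξ₁
          + deriv (deriv (fun y : ℝ ↦ Ψ₃ ψ t ξ₁ y ξ₃)) ξ₂
          + deriv (deriv (fun y : ℝ ↦ Ψ₃ ψ t ξ₁ ξ₂ y)) ξ₃) ∧
    Tendsto (fun t : ℝ ↦
        ∫ ξ₁ in (0 : ℝ)..(2 * π), ∫ ξ₂ in (0 : ℝ)..(2 * π), ∫ ξ₃ in (0 : ℝ)..(2 * π),
          |Ψ₃ ψ t ξ₁ ξ₂ ξ₃ - ψ (ξ₁, ξ₂, ξ₃)|)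
      (𝓝[>] 0) (𝓝 0) := by
  have hψ : Integrable (fun z : Fin 3 → ℝ ↦ ψ (z 0, z 1, z 2)) (periodMeasure (Fin 3)) := by
    rw [integrable_fin_three_iff, Measure.prod_restrict, Measure.prod_restrict]
    exact hint.mono_set (Set.prod_mono Set.Ioc_subset_Icc_self
      (Set.prod_mono Set.Ioc_subset_Icc_self Set.Ioc_subset_Icc_self))
  exact ⟨contDiffOn_Ψ₃ hψ, fun t ξ₁ ξ₂ ξ₃ _ ↦ Ψ₃_periodic ψ t ξ₁ ξ₂ ξ₃,
    fun t ξ₁ ξ₂ ξ₃ ht ↦ deriv_Ψ₃ ht hψ ξ₁ ξ₂ ξ₃, tendsto_integral_abs_Ψ₃_sub hψ⟩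

/-- If `ψ : ℝ³ → ℝ` is measurable, `2π`-periodic in each variable and integrable on `[0,2π]³`,
then `Ψ̃(t,ξ) := ∫_{[0,2π]³} Φ̃(t,ξ−z)·ψ(z) dz` is smooth on `(0,∞) × ℝ³`, is `2π`-periodic in
each space variable, solves the heat equation pointwise, and attains the initial data in `L¹`. -/
theorem statement_18 (ψ : ℝ × ℝ × ℝ → ℝ) (hmeas : Measurable ψ)
    (hper₁ : ∀ x₁ x₂ x₃ : ℝ, ψ (x₁ + 2 * π, x₂, x₃) = ψ (x₁, x₂, x₃))
    (hper₂ : ∀ x₁ x₂ x₃ : ℝ, ψ (x₁, x₂ + 2 * π, x₃) = ψ (x₁, x₂, x₃))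
    (hper₃ : ∀ x₁ x₂ x₃ : ℝ, ψ (x₁, x₂, x₃ + 2 * π) = ψ (x₁, x₂, x₃))
    (hint : IntegrableOn ψ
      (Set.Icc (0 : ℝ) (2 * π) ×ˢ Set.Icc (0 : ℝ) (2 * π) ×ˢ Set.Icc (0 : ℝ) (2 * π))) :
    ContDiffOn ℝ (⊤ : ℕ∞) (fun p : ℝ × ℝ × ℝ × ℝ => Ψ₃ ψ p.1 p.2.1 p.2.2.1 p.2.2.2)
      (Set.Ioi (0 : ℝ) ×ˢ (Set.univ : Set (ℝ × ℝ × ℝ))) ∧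
    (∀ t ξ₁ ξ₂ ξ₃ : ℝ, 0 < t →
      Ψ₃ ψ t (ξ₁ + 2 * π) ξ₂ ξ₃ = Ψ₃ ψ t ξ₁ ξ₂ ξ₃ ∧
      Ψ₃ ψ t ξ₁ (ξ₂ + 2 * π) ξ₃ = Ψ₃ ψ t ξ₁ ξ₂ ξ₃ ∧
      Ψ₃ ψ t ξ₁ ξ₂ (ξ₃ + 2 * π) = Ψ₃ ψ t ξ₁ ξ₂ ξ₃) ∧
    (∀ t ξ₁ ξ₂ ξ₃ : ℝ, 0 < t →
      deriv (fun s : ℝ => Ψ₃ ψ s ξ₁ ξ₂ ξ₃) t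
        = deriv (deriv (fun y : ℝ => Ψ₃ ψ t y ξ₂ ξ₃)) ξ₁
          + deriv (deriv (fun y : ℝ => Ψ₃ ψ t ξ₁ y ξ₃)) ξ₂
          + deriv (deriv (fun y : ℝ => Ψ₃ ψ t ξ₁ ξ₂ y)) ξ₃) ∧
    Tendsto (fun t : ℝ =>
        ∫ ξ₁ in (0 : ℝ)..(2 * π), ∫ ξ₂ in (0 : ℝ)..(2 * π), ∫ ξ₃ in (0 : ℝ)..(2 * π),
          |Ψ₃ ψ t ξ₁ ξ₂ ξ₃ - ψ (ξ₁, ξ₂, ξ₃)|)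
      (nhdsWithin 0 (Set.Ioi 0)) (nhds 0) :=
  statement_18_general ψ hint
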